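/- The family of regular ω-languages over X is a Boolean algebra: if F and G ⊆ X^ω are regular ω-languages, then F ∪ G, F ∩ G and X^ω \ F are regular ω-languages. -/

import Mathlib

open Set MeasureTheory Computability

namespace AutoBaire

/-- The Cantor topology on the space of ω-words over `X`:
the product of the discrete topology on `X`. -/
def cantorTop (X : Type) : TopologicalSpace (ℕ → X) :=
  @Pi.topologicalSpace ℕ (fun _ => X) (fun _ => ⊥)

/-- The Borel σ-algebra of the Cantor space. -/
def cantorBorel (X : Type) : MeasurableSpace (ℕ → X) :=
  @borel (ℕ → X) (cantorTop X)

variable {X : Type}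

/-- Concatenation `w·ξ` of a finite word with an ω-word. -/
def wcat (w : List X) (ξ : ℕ → X) : ℕ → X :=
  Stream'.appendStream' w ξ

/-- The ball (cylinder) `w·X^ω`. -/
def cyl (w : List X) : Set (ℕ → X) := {ξ | ∃ η : ℕ → X, ξ = wcat w η}

/-- The ω-language `W·A` for a language `W` and an ω-language `A`. -/
def catOmega (W : Language X) (A : Set (ℕ → X)) : Set (ℕ → X) :=
  {ξ | ∃ w ∈ W, ∃ η ∈ A, ξ = wcat w η}

/-- `V^ω`: the set of ω-words that are infinite concatenations
`v₁·v₂·⋯` of non-empty words `vᵢ ∈ V`. -/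
def omegaPow (V : Language X) : Set (ℕ → X) :=
  {ξ | ∃ f : ℕ → List X, (∀ i, f i ∈ V ∧ f i ≠ []) ∧
    ∀ k, ξ ∈ cyl (((List.range k).map f).flatten)}

/-- Regular languages: those obtained from finite languages via the operations
union, concatenation and star. -/
inductive IsRegLang : Language X → Prop
  | finite (W : Language X) : (W : Set (List X)).Finite → IsRegLang W
  | union (W V : Language X) : IsRegLang W → IsRegLang V → IsRegLang (W + V)
  | concat (W V : Language X) : IsRegLang W → IsRegLang V → IsRegLang (W * V)
  | star (W : Language X) : IsRegLang W → IsRegLang (W∗)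

/-- Regular ω-languages: finite unions `⋃ᵢ Wᵢ·Vᵢ^ω` with `Wᵢ, Vᵢ` regular. -/
def IsRegOmega (F : Set (ℕ → X)) : Prop :=
  ∃ (n : ℕ) (W V : Fin n → Language X),
    (∀ i, IsRegLang (W i) ∧ IsRegLang (V i)) ∧
    F = ⋃ i, catOmega (W i) (omegaPow (V i))

/-- `X*·w·X^ω`: the set of ω-words containing `w` as an infix. -/
def infixOcc (w : List X) : Set (ℕ → X) :=
  {ξ | ∃ u : List X, ξ ∈ cyl (u ++ w)}

/-- An ω-word is disjunctive if every finite word occurs in it as an infix. -/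
def Disjunctive (ξ : ℕ → X) : Prop := ∀ w : List X, ξ ∈ infixOcc w

/-- Ultimately periodic ω-words: `ξ = w·v·v·v·⋯` with `v ≠ e`. -/
def UltPeriodic (ξ : ℕ → X) : Prop :=
  ∃ (w v : List X) (h : v ≠ []), ξ = wcat w (Stream'.cycle v h)

/-- The Automatic Baire property: `F Δ E ⊆ F'` for some regular open
ω-language `E` and some regular ω-language `F'` of first Baire category. -/
def HasABP (F : Set (ℕ → X)) : Prop :=
  ∃ E F' : Set (ℕ → X),
    IsRegOmega E ∧ @IsOpen _ (cantorTop X) E ∧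
    IsRegOmega F' ∧ @IsMeagre _ (cantorTop X) F' ∧
    symmDiff F E ⊆ F'

/-- The measure is finite and non-null: `0 < μ(X^ω) < ∞`. -/
def FiniteNonNull (μ : @MeasureTheory.Measure (ℕ → X) (cantorBorel X)) : Prop :=
  0 < μ Set.univ ∧ μ Set.univ < ⊤

/-- `supp(μ) = X^ω`: every non-empty open set has positive measure. -/
def FullSupport (μ : @MeasureTheory.Measure (ℕ → X) (cantorBorel X)) : Prop :=
  ∀ U : Set (ℕ → X), @IsOpen _ (cantorTop X) U → U.Nonempty → 0 < μ U

/-- The balance condition: there is `c > 0` such that for all `w ∈ X*`, `x ∈ X`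
either `μ(wx·X^ω) = 0` or `c·μ(w·X^ω) ≤ μ(wx·X^ω)`. -/
def Balanced (μ : @MeasureTheory.Measure (ℕ → X) (cantorBorel X)) : Prop :=
  ∃ c : ENNReal, 0 < c ∧ ∀ (w : List X) (x : X),
    μ (cyl (w ++ [x])) = 0 ∨ c * μ (cyl w) ≤ μ (cyl (w ++ [x]))


section RegLang

theorem isRegular_of_det {X T : Type} (L : Language X) (D : List X → T)
    (hfin : (Set.range D).Finite)
    (h : ∀ x y, D x = D y → L.leftQuotient x = L.leftQuotient y) : L.IsRegular := by
  apply Language.IsRegular.of_finite_range_leftQuotient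
  have hf : Function.FactorsThrough L.leftQuotient D := fun x y hxy => h x y hxy
  obtain ⟨g, hg⟩ := (Function.factorsThrough_iff L.leftQuotient).1 hf
  rw [hg, Set.range_comp]
  exact hfin.image g

theorem isRegular_finite {X : Type} (L : Language X) (hL : Set.Finite (L : Set (List X))) :
    L.IsRegular := by
  apply Language.IsRegular.of_finite_range_leftQuotient
  have hS : Set.Finite (⋃ w ∈ (L : Set (List X)), {v | v ∈ w.tails}) := by
    apply hL.biUnion
    intro w _
    exact List.finite_toSet _
  apply hS.finite_subsets.subset
  rintro _ ⟨x, rfl⟩ z hz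
  simp only [Set.mem_iUnion]
  refine ⟨x ++ z, hz, ?_⟩
  simp

theorem isRegular_mul {X : Type} (W V : Language X) (hW : W.IsRegular) (hV : V.IsRegular) :
    (W * V).IsRegular := by
  have fW := hW.finite_range_leftQuotient
  have fV := hV.finite_range_leftQuotient
  let D2 : List X → Set (Language X) := fun x => {K | ∃ w ∈ W, ∃ y, w ++ y = x ∧ K = V.leftQuotient y}
  have key : ∀ x z, z ∈ (W * V).leftQuotient x ↔ (z ∈ W.leftQuotient x * V ∨ ∃ K ∈ D2 x, z ∈ K) := by
    intro x z
    rw [Language.mem_leftQuotient, Language.mem_mul, Language.mem_mul]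
    constructor
    · rintro ⟨a, ha, b, hb, hab⟩
      rcases List.append_eq_append_iff.1 hab with ⟨c, h1, h2⟩ | ⟨c, h1, h2⟩
      · right
        exact ⟨_, ⟨a, ha, c, h1.symm, rfl⟩, by rw [Language.mem_leftQuotient, ← h2]; exact hb⟩
      · left
        exact ⟨c, by rw [Language.mem_leftQuotient, ← h1]; exact ha, b, hb, h2.symm⟩
    · rintro (⟨a, ha, b, hb, hab⟩ | ⟨_, ⟨w, hw, y, rfl, rfl⟩, hz⟩)
      · exact ⟨x ++ a, ha, b, hb, by simp [hab]⟩
      · exact ⟨w, hw, y ++ z, hz, by simp⟩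
  apply isRegular_of_det _ (fun x => (W.leftQuotient x, D2 x))
  · apply (fW.prod fV.finite_subsets).subset
    rintro _ ⟨x, rfl⟩
    refine ⟨⟨x, rfl⟩, ?_⟩
    rintro K ⟨w, hw, y, _, rfl⟩
    exact ⟨y, rfl⟩
  · intro x y hxy
    have h1 := congrArg Prod.fst hxy
    have h2 := congrArg Prod.snd hxy
    simp only at h1 h2
    ext z
    rw [key, key, h1, h2]

theorem star_split {X : Type} (W : Language X) (L : List (List X)) (hL : ∀ y ∈ L, y ∈ W) :
    ∀ x z, x ++ z = L.flatten → x ≠ [] → ∃ w y p q, w ++ y = x ∧ w ∈ W∗ ∧ z = p ++ q ∧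
      y ++ p ∈ W ∧ q ∈ W∗ := by
  induction L with
  | nil => intro x z h hx; simp at h; exact absurd h.1 hx
  | cons a L ih =>
    intro x z h hx
    have ha : a ∈ W := hL a (by simp)
    have hL' : ∀ y ∈ L, y ∈ W := fun y hy => hL y (by simp [hy])
    rw [List.flatten_cons] at h
    rcases List.append_eq_append_iff.1 h with ⟨c, h1, h2⟩ | ⟨c, h1, h2⟩
    · exact ⟨[], x, c, L.flatten, by simp, Language.nil_mem_kstar _, h2, h1 ▸ ha,
        Language.join_mem_kstar hL'⟩
    · by_cases hc : c = []
      · subst hc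
        refine ⟨[], x, [], z, by simp, Language.nil_mem_kstar _, by simp, ?_, ?_⟩
        · simp at h1; simpa [h1] using ha
        · simp at h2; rw [← h2]; exact Language.join_mem_kstar hL'
      · obtain ⟨w, y, p, q, e1, e2, e3, e4, e5⟩ := ih hL' c z h2.symm hc
        obtain ⟨M, rfl, hM⟩ := e2
        refine ⟨a ++ M.flatten, y, p, q, by simp [h1, ← e1], ?_, e3, e4, e5⟩
        refine ⟨a :: M, by simp, ?_⟩
        intro y hy
        rcases List.mem_cons.1 hy with rfl | hy
        · exact ha
        · exact hM y hy

theorem isRegular_star {X : Type} (W : Language X) (hW : W.IsRegular) : (W∗).IsRegular := by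
  have fW := hW.finite_range_leftQuotient
  let D2 : List X → Set (Language X) := fun x => {K | ∃ w ∈ W∗, ∃ y, w ++ y = x ∧ K = W.leftQuotient y}
  have key : ∀ x z, z ∈ (W∗).leftQuotient x ↔
      ((x = [] ∧ z ∈ W∗) ∨ (x ≠ [] ∧ ∃ K ∈ D2 x, z ∈ K * W∗)) := by
    intro x z
    rw [Language.mem_leftQuotient]
    by_cases hx : x = []
    · simp [hx]
    · simp only [hx, false_and, false_or, ne_eq, not_false_eq_true, true_and]
      constructor
      · rintro ⟨L, h, hL⟩
        obtain ⟨w, y, p, q, e1, e2, e3, e4, e5⟩ := star_split W L hL x z h hx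
        exact ⟨_, ⟨w, e2, y, e1, rfl⟩, Language.mem_mul.2 ⟨p, e4, q, e5, e3.symm⟩⟩
      · rintro ⟨_, ⟨w, ⟨L, rfl, hL⟩, y, rfl, rfl⟩, hz⟩
        obtain ⟨p, hp, q, ⟨L', rfl, hL'⟩, rfl⟩ := Language.mem_mul.1 hz
        refine ⟨L ++ (y ++ p) :: L', by simp, ?_⟩
        intro v hv
        rcases List.mem_append.1 hv with hv | hv
        · exact hL v hv
        · rcases List.mem_cons.1 hv with rfl | hv
          · exact hp
          · exact hL' v hv
  apply isRegular_of_det _ (fun x => (x = [], D2 x))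
  · apply ((Set.finite_univ (α := Prop)).prod fW.finite_subsets).subset
    rintro _ ⟨x, rfl⟩
    refine ⟨trivial, ?_⟩
    rintro K ⟨w, hw, y, _, rfl⟩
    exact ⟨y, rfl⟩
  · intro x y hxy
    have h1 := congrArg Prod.fst hxy
    have h2 := congrArg Prod.snd hxy
    simp only at h1 h2
    ext z
    rw [key, key, h2, ne_eq, h1]

theorem IsRegLang.isRegular {X : Type} {L : Language X} (h : IsRegLang L) : L.IsRegular := by
  induction h with
  | finite W hW => exact isRegular_finite W hW
  | union W V _ _ h1 h2 => exact h1.add h2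
  | concat W V _ _ h1 h2 => exact isRegular_mul W V h1 h2
  | star W _ h => exact isRegular_star W h

inductive Path {X σ : Type} (δ : σ → X → σ) (S : Set σ) : σ → List X → σ → Prop
  | nil (p) : Path δ S p [] p
  | single (p x) : Path δ S p [x] (δ p x)
  | cons (p x v q) : δ p x ∈ S → Path δ S (δ p x) v q → Path δ S p (x :: v) q

theorem Path.mono {X σ : Type} {δ : σ → X → σ} {S T : Set σ} (hST : S ⊆ T) {p u q}
    (h : Path δ S p u q) : Path δ T p u q := by
  induction h with
  | nil p => exact .nil p
  | single p x => exact .single p x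
  | cons p x v q h _ ih => exact .cons p x v q (hST h) ih

theorem Path.append {X σ : Type} {δ : σ → X → σ} {S : Set σ} {p u r v q}
    (h : Path δ S p u r) (hr : r ∈ S) (h2 : Path δ S r v q) : Path δ S p (u ++ v) q := by
  induction h with
  | nil p => exact h2
  | single p x => exact .cons p x v q hr h2
  | cons p x v' q' h _ ih => exact .cons p x _ q h (ih hr h2)

def pathL {X σ : Type} (δ : σ → X → σ) (S : Set σ) (p q : σ) : Language X :=
  {u | Path δ S p u q}

theorem path_regLang {X σ : Type} [Finite X] (δ : σ → X → σ) (S : Set σ) (hS : S.Finite) :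
    ∀ p q, IsRegLang (pathL δ S p q) := by
  induction S, hS using Set.Finite.induction_on with
  | empty =>
    intro p q
    apply IsRegLang.finite
    apply (List.finite_length_le X 1).subset
    intro u hu
    cases hu with
    | nil => simp
    | single => simp
    | cons _ _ _ _ h1 _ => exact absurd h1 (Set.notMem_empty _)
  | @insert r S _ _ ih =>
    intro p q
    have : pathL δ (insert r S) p q =
        (pathL δ S p q) + (pathL δ S p r) *
        ((pathL δ S r r)∗ * (pathL δ S r q)) := by
      have hsub : S ⊆ insert r S := Set.subset_insert r S
      ext u
      rw [Language.mem_add, Language.mem_mul]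
      constructor
      · intro h
        change Path δ (insert r S) p u q at h
        induction h with
        | nil p => left; exact .nil p
        | single p x => left; exact .single p x
        | cons p x v q h _ ih' =>
          rcases h with h | h
          · right
            refine ⟨[x], by rw [← h]; exact .single p x, v, ?_, rfl⟩
            rw [h] at ih'
            rw [Language.mem_mul]
            rcases ih' with ih' | ⟨a, ha, b, hb, rfl⟩
            · exact ⟨[], Language.nil_mem_kstar _, v, ih', rfl⟩
            · rw [Language.mem_mul] at hb
              obtain ⟨c, ⟨L, rfl, hL⟩, d, hd, rfl⟩ := hb
              refine ⟨a ++ L.flatten, ⟨a :: L, by simp, ?_⟩, d, hd, by simp⟩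
              intro y hy
              rcases List.mem_cons.1 hy with rfl | hy
              · exact ha
              · exact hL y hy
          · rcases ih' with ih' | ⟨a, ha, b, hb, rfl⟩
            · left; exact .cons p x v q h ih'
            · right
              exact ⟨x :: a, .cons p x a r h ha, b, hb, rfl⟩
      · have hr : r ∈ insert r S := Set.mem_insert r S
        rintro (h | ⟨a, ha, b, hb, rfl⟩)
        · exact Path.mono hsub h
        · rw [Language.mem_mul] at hb
          obtain ⟨c, ⟨L, rfl, hL⟩, d, hd, rfl⟩ := hb
          refine Path.append (Path.mono hsub ha) hr ?_
          refine Path.append (r := r) ?_ hr (Path.mono hsub hd)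
          clear ha hd
          induction L with
          | nil => exact .nil r
          | cons y L ihL =>
            rw [List.flatten_cons]
            exact Path.append (Path.mono hsub (hL y (by simp))) hr
              (ihL (fun z hz => hL z (by simp [hz])))
    rw [this]
    exact .union _ _ (ih p q) (.concat _ _ (ih p r) (.concat _ _ (.star _ (ih r r)) (ih r q)))

theorem path_univ {X σ : Type} (δ : σ → X → σ) (p q : σ) (u : List X) :
    Path δ Set.univ p u q ↔ u.foldl δ p = q := by
  constructor
  · intro h
    induction h with
    | nil p => rfl
    | single p x => rfl
    | cons p x v q _ _ ih => exact ih
  · intro h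
    induction u generalizing p with
    | nil => simp at h; subst h; exact .nil p
    | cons x v ih => exact .cons p x v q trivial (ih _ h)

theorem regLang_fiber {X M : Type} [Finite X] [Finite M] (φ : List X → M) (mul : M → M → M)
    (h : ∀ u v, φ (u ++ v) = mul (φ u) (φ v)) (s : M) :
    IsRegLang ({u | φ u = s} : Language X) := by
  have := path_regLang (fun m x => mul m (φ [x])) Set.univ Set.finite_univ (φ []) s
  suffices heq : ({u | φ u = s} : Language X) = pathL (fun m x => mul m (φ [x])) Set.univ (φ []) s by
    exact heq ▸ this
  apply Set.ext
  intro u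
  change φ u = s ↔ Path _ _ _ _ _
  rw [path_univ]
  have : ∀ w, u.foldl (fun m x => mul m (φ [x])) (φ w) = φ (w ++ u) := by
    induction u with
    | nil => simp
    | cons x v ih => intro w; rw [List.foldl_cons, ← h, ih]; simp
  rw [this []]; rfl

end RegLang
section Omega

def seg {X : Type} (ξ : ℕ → X) (i j : ℕ) : List X := (List.Ico i j).map ξ

theorem seg_append {X : Type} (ξ : ℕ → X) {i j k : ℕ} (h1 : i ≤ j) (h2 : j ≤ k) :
    seg ξ i j ++ seg ξ j k = seg ξ i k := by
  rw [seg, seg, ← List.map_append, List.Ico.append_consecutive h1 h2, seg]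

theorem seg_self {X : Type} (ξ : ℕ → X) (i : ℕ) : seg ξ i i = [] := by simp [seg]

theorem seg_succ {X : Type} (ξ : ℕ → X) {i j : ℕ} (h : i ≤ j) :
    seg ξ i (j + 1) = seg ξ i j ++ [ξ j] := by
  rw [seg, List.Ico.succ_top h]; simp [seg]

theorem seg_cons {X : Type} (ξ : ℕ → X) {i j : ℕ} (h : i < j) :
    seg ξ i j = ξ i :: seg ξ (i + 1) j := by
  rw [seg, List.Ico.eq_cons h]; simp [seg]

theorem seg_length {X : Type} (ξ : ℕ → X) (i j : ℕ) : (seg ξ i j).length = j - i := by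
  simp [seg]

theorem seg_shift {X : Type} (ξ : ℕ → X) (m i j : ℕ) :
    seg (fun n => ξ (m + n)) i j = seg ξ (m + i) (m + j) := by
  rw [seg, seg, add_comm m i, add_comm m j, ← List.Ico.map_add, List.map_map]; rfl

theorem wcat_shift {X : Type} (w : List X) (η : ℕ → X) (n : ℕ) :
    wcat w η (w.length + n) = η n := by
  induction w with
  | nil => simp [wcat, Stream'.appendStream']
  | cons x w ih =>
    rw [List.length_cons, show w.length + 1 + n = (w.length + n) + 1 by omega]
    exact ih

theorem seg_wcat {X : Type} (w : List X) (η : ℕ → X) : seg (wcat w η) 0 w.length = w := by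
  induction w with
  | nil => simp [seg]
  | cons x w ih =>
    rw [seg_cons _ (by simp)]
    have : seg (wcat (x :: w) η) (0 + 1) (x :: w).length = seg (wcat w η) 0 w.length := by
      rw [List.length_cons, add_comm 0 1, add_comm w.length 1, ← seg_shift]
      congr 1
      funext n
      rw [add_comm]; rfl
    rw [this, ih]; rfl

theorem wcat_seg {X : Type} (ξ : ℕ → X) (m : ℕ) :
    wcat (seg ξ 0 m) (fun n => ξ (m + n)) = ξ := by
  induction m generalizing ξ with
  | zero => simp [seg_self, wcat, Stream'.appendStream']
  | succ m ih =>
    rw [seg_cons _ (by simp)]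
    have : seg ξ (0 + 1) (m + 1) = seg (fun n => ξ (1 + n)) 0 m := by
      rw [seg_shift, add_comm m 1]
    rw [this]
    funext n
    cases n with
    | zero => rfl
    | succ n =>
      have := congrFun (ih (fun n => ξ (1 + n))) n
      rw [show n + 1 = 1 + n by omega, ← this, add_comm 1 n]
      change wcat _ _ n = _
      congr 1
      funext k
      congr 1
      omega

theorem mem_cyl {X : Type} (w : List X) (ξ : ℕ → X) : ξ ∈ cyl w ↔ seg ξ 0 w.length = w := by
  constructor
  · rintro ⟨η, rfl⟩; exact seg_wcat w η
  · intro h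
    refine ⟨fun n => ξ (w.length + n), ?_⟩
    conv_rhs => rw [← h]
    rw [h]
    conv_lhs => rw [← wcat_seg ξ w.length, h]

theorem mem_catOmega {X : Type} (W V : Language X) (ξ : ℕ → X) :
    ξ ∈ catOmega W (omegaPow V) ↔ ∃ k : ℕ → ℕ, StrictMono k ∧ seg ξ 0 (k 0) ∈ W ∧
      ∀ i, seg ξ (k i) (k (i + 1)) ∈ V := by
  constructor
  · rintro ⟨w, hw, η, ⟨f, hf, hcyl⟩, rfl⟩
    let P : ℕ → List X := fun i => ((List.range i).map f).flatten
    have hP : ∀ i, P (i + 1) = P i ++ f i := by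
      intro i; simp [P, List.range_succ]
    have hc : ∀ i, seg η 0 (P i).length = P i := fun i => (mem_cyl _ _).1 (hcyl i)
    have hs : ∀ i, seg η (P i).length (P (i + 1)).length = f i := by
      intro i
      have h1 := hc (i + 1)
      rw [← seg_append η (Nat.zero_le (P i).length) (by rw [hP]; simp), hc i] at h1
      conv_rhs at h1 => rw [hP i]
      exact List.append_cancel_left h1
    refine ⟨fun i => w.length + (P i).length, ?_, ?_, ?_⟩
    · apply strictMono_nat_of_lt_succ
      intro i
      rw [hP]
      have := List.length_pos_of_ne_nil (hf i).2
      simp; omega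
    · have : (P 0).length = 0 := by simp [P]
      simp only [this, add_zero]
      rw [seg_wcat]; exact hw
    · intro i
      simp only
      rw [← seg_shift]
      have : (fun n => wcat w η (w.length + n)) = η := by funext n; exact wcat_shift w η n
      rw [this, hs]; exact (hf i).1
  · rintro ⟨k, hk, hW, hV⟩
    refine ⟨_, hW, fun n => ξ (k 0 + n), ?_, (wcat_seg ξ (k 0)).symm⟩
    refine ⟨fun i => seg ξ (k i) (k (i + 1)), fun i => ⟨hV i, ?_⟩, ?_⟩
    · have := hk (Nat.lt_add_one i)
      intro h
      have h2 := congrArg List.length h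
      rw [seg_length] at h2
      simp at h2; omega
    · intro i
      have hP : ((List.range i).map (fun i => seg ξ (k i) (k (i + 1)))).flatten = seg ξ (k 0) (k i) := by
        induction i with
        | zero => simp [seg_self]
        | succ i ih =>
          rw [List.range_succ, List.map_append, List.flatten_append, ih]
          simp only [List.map_cons, List.map_nil, List.flatten_cons, List.flatten_nil, List.append_nil]
          exact seg_append ξ (hk.monotone (Nat.zero_le i)) (hk.monotone (Nat.le_succ i))
      rw [hP, mem_cyl, seg_shift, seg_length, add_zero, Nat.add_sub_cancel' (hk.monotone (Nat.zero_le i))]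

theorem ramsey_consec {M : Type} [Finite M] (c : ℕ → ℕ → M) :
    ∃ (k : ℕ → ℕ) (e : M), StrictMono k ∧ ∀ i, c (k i) (k (i + 1)) = e := by
  let U := Filter.hyperfilter ℕ
  have h1 : ∀ i, ∃ d, ∀ᶠ j in (U : Filter ℕ), c i j = d := fun i =>
    Ultrafilter.eventually_exists_iff.1 (Filter.Eventually.of_forall fun j => ⟨_, rfl⟩)
  choose d hd using h1
  obtain ⟨e, he⟩ : ∃ e, ∀ᶠ j in (U : Filter ℕ), d j = e :=
    Ultrafilter.eventually_exists_iff.1 (Filter.Eventually.of_forall fun j => ⟨_, rfl⟩)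
  have hgt : ∀ i, ∀ᶠ j in (U : Filter ℕ), i < j := fun i =>
    Nat.hyperfilter_le_atTop (Filter.eventually_gt_atTop i)
  have h2 : ∀ i : {i // d i = e}, ∃ j : {i // d i = e}, i.1 < j.1 ∧ c i.1 j.1 = e := by
    rintro ⟨i, hi⟩
    obtain ⟨j, hj1, hj2, hj3⟩ := (he.and ((hgt i).and (hd i))).exists
    exact ⟨⟨j, hj1⟩, hj2, hj3.trans hi⟩
  choose g hg using h2
  obtain ⟨i0, hi0⟩ := he.exists
  let k : ℕ → {i // d i = e} := fun n => Nat.rec ⟨i0, hi0⟩ (fun _ x => g x) n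
  exact ⟨fun n => (k n).1, e, strictMono_nat_of_lt_succ fun n => (hg (k n)).1, fun n => (hg (k n)).2⟩

def Sat {X : Type} (F : Set (ℕ → X)) : Prop :=
  ∃ (M : Type) (_ : Finite M) (φ : List X → M) (mul : M → M → M),
    (∀ u v, φ (u ++ v) = mul (φ u) (φ v)) ∧
    ∀ (ξ η : ℕ → X) (a b : ℕ → ℕ), StrictMono a → StrictMono b →
      φ (seg ξ 0 (a 0)) = φ (seg η 0 (b 0)) →
      (∀ i, φ (seg ξ (a i) (a (i + 1))) = φ (seg η (b i) (b (i + 1)))) → ξ ∈ F → η ∈ F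

theorem Sat.compl {X : Type} {F : Set (ℕ → X)} (h : Sat F) : Sat Fᶜ := by
  obtain ⟨M, hM, φ, mul, hmul, h⟩ := h
  exact ⟨M, hM, φ, mul, hmul, fun ξ η a b ha hb h0 hi hξ hη =>
    hξ (h η ξ b a hb ha h0.symm (fun i => (hi i).symm) hη)⟩

theorem Sat.union {X : Type} {F G : Set (ℕ → X)} (h : Sat F) (h' : Sat G) : Sat (F ∪ G) := by
  obtain ⟨M, hM, φ, mul, hmul, h⟩ := h
  obtain ⟨M', hM', φ', mul', hmul', h'⟩ := h'
  refine ⟨M × M', inferInstance, fun u => (φ u, φ' u), fun x y => (mul x.1 y.1, mul' x.2 y.2),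
    fun u v => by simp [hmul, hmul'], ?_⟩
  intro ξ η a b ha hb h0 hi hξ
  simp only [Prod.mk.injEq] at h0 hi
  rcases hξ with hξ | hξ
  · exact Or.inl (h ξ η a b ha hb h0.1 (fun i => (hi i).1) hξ)
  · exact Or.inr (h' ξ η a b ha hb h0.2 (fun i => (hi i).2) hξ)

theorem Sat.iUnion {X : Type} : ∀ (n : ℕ) (F : Fin n → Set (ℕ → X)), (∀ i, Sat (F i)) →
    Sat (⋃ i, F i) := by
  intro n
  induction n with
  | zero =>
    intro F _
    refine ⟨Unit, inferInstance, fun _ => (), fun _ _ => (), fun _ _ => rfl, ?_⟩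
    intro ξ η a b _ _ _ _ h
    simp at h
  | succ n ih =>
    intro F h
    have : (⋃ i, F i) = F 0 ∪ ⋃ i : Fin n, F i.succ := by
      ext ξ; simp [Fin.exists_fin_succ]
    rw [this]
    exact (h 0).union (ih _ fun i => h i.succ)

theorem isRegOmega_of_finite {X ι : Type} [Finite ι] (W V : ι → Language X)
    (h : ∀ i, IsRegLang (W i) ∧ IsRegLang (V i)) :
    IsRegOmega (⋃ i, catOmega (W i) (omegaPow (V i))) := by
  obtain ⟨n, ⟨e⟩⟩ := Finite.exists_equiv_fin ι
  refine ⟨n, fun i => W (e.symm i), fun i => V (e.symm i), fun i => h _, ?_⟩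
  exact (e.symm.surjective.iUnion_comp (fun i => catOmega (W i) (omegaPow (V i)))).symm

theorem Sat.isRegOmega {X : Type} [Finite X] {F : Set (ℕ → X)} (h : Sat F) : IsRegOmega F := by
  obtain ⟨M, hM, φ, mul, hmul, h⟩ := h
  let Lg : M → Language X := fun s => {u | φ u = s}
  have key : F = ⋃ p : {p : M × M // catOmega (Lg p.1) (omegaPow (Lg p.2)) ⊆ F},
      catOmega (Lg p.1.1) (omegaPow (Lg p.1.2)) := by
    apply Set.Subset.antisymm
    · intro ξ hξ
      obtain ⟨k, e, hk, he⟩ := ramsey_consec (fun i j => φ (seg ξ i j))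
      have hmem : ξ ∈ catOmega (Lg (φ (seg ξ 0 (k 0)))) (omegaPow (Lg e)) :=
        (mem_catOmega _ _ _).2 ⟨k, hk, rfl, he⟩
      refine Set.mem_iUnion.2 ⟨⟨(φ (seg ξ 0 (k 0)), e), ?_⟩, hmem⟩
      intro η hη
      obtain ⟨b, hb, h0, hi⟩ := (mem_catOmega _ _ _).1 hη
      exact h ξ η k b hk hb h0.symm (fun i => (he i).trans (hi i).symm) hξ
    · exact Set.iUnion_subset fun p => p.2
  rw [key]
  exact isRegOmega_of_finite _ _ fun p => ⟨regLang_fiber φ mul hmul _, regLang_fiber φ mul hmul _⟩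

end Omega
section Buchi

/-- Paths with flags of a nondeterministic automaton with marked transitions. -/
def Prof {X Q : Type} (st : Q → X → Q → Bool → Prop) : List X → Q → Q → Bool → Prop
  | [], q, q', b => q = q' ∧ b = false
  | x :: u, q, q', b => ∃ q1 b1 b2, st q x q1 b1 ∧ Prof st u q1 q' b2 ∧ b = (b1 || b2)

theorem Prof_append {X Q : Type} (st : Q → X → Q → Bool → Prop) (u v : List X) :
    ∀ q q' b, Prof st (u ++ v) q q' b ↔
      ∃ q1 b1 b2, Prof st u q q1 b1 ∧ Prof st v q1 q' b2 ∧ b = (b1 || b2) := by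
  induction u with
  | nil =>
    intro q q' b
    constructor
    · intro h; exact ⟨q, false, b, ⟨rfl, rfl⟩, h, by simp⟩
    · rintro ⟨q1, b1, b2, ⟨rfl, rfl⟩, h, rfl⟩; simpa using h
  | cons x u ih =>
    intro q q' b
    simp only [List.cons_append, Prof, ih]
    constructor
    · rintro ⟨q1, b1, b2, h1, ⟨q2, b3, b4, h2, h3, rfl⟩, rfl⟩
      exact ⟨q2, b1 || b3, b4, ⟨q1, b1, b3, h1, h2, rfl⟩, h3, by simp [Bool.or_assoc]⟩
    · rintro ⟨q2, b5, b4, ⟨q1, b1, b3, h1, h2, rfl⟩, h3, rfl⟩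
      exact ⟨q1, b1, b3 || b4, h1, ⟨q2, b3, b4, h2, h3, rfl⟩, by simp [Bool.or_assoc]⟩

theorem Prof_of_run {X Q : Type} (st : Q → X → Q → Bool → Prop) (ξ : ℕ → X) (ρ : ℕ → Q)
    (c : ℕ → Bool) (h : ∀ n, st (ρ n) (ξ n) (ρ (n + 1)) (c n)) (i d : ℕ) :
    ∃ e, Prof st (seg ξ i (i + d)) (ρ i) (ρ (i + d)) e ∧
      ∀ n, i ≤ n → n < i + d → c n = true → e = true := by
  induction d with
  | zero => exact ⟨false, by rw [add_zero, seg_self]; exact ⟨rfl, rfl⟩, fun n h1 h2 => by omega⟩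
  | succ d ih =>
    obtain ⟨e, h1, h2⟩ := ih
    refine ⟨e || c (i + d), ?_, ?_⟩
    · rw [← add_assoc, seg_succ _ (by omega), Prof_append]
      exact ⟨_, _, _, h1, ⟨_, _, _, h _, ⟨rfl, rfl⟩, rfl⟩, by simp⟩
    · intro n hn1 hn2 hc
      by_cases hn : n = i + d
      · subst hn; simp [hc]
      · simp [h2 n hn1 (by omega) hc]

theorem run_of_Prof {X Q : Type} (st : Q → X → Q → Bool → Prop) (ξ : ℕ → X) (d : ℕ) :
    ∀ i q q' e, Prof st (seg ξ i (i + d)) q q' e → ∃ (ρ : ℕ → Q) (c : ℕ → Bool),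
      ρ i = q ∧ ρ (i + d) = q' ∧ (∀ n, i ≤ n → n < i + d → st (ρ n) (ξ n) (ρ (n + 1)) (c n)) ∧
      (e = true → ∃ n, i ≤ n ∧ n < i + d ∧ c n = true) := by
  induction d with
  | zero =>
    intro i q q' e h
    rw [add_zero, seg_self] at h
    obtain ⟨rfl, rfl⟩ := h
    exact ⟨fun _ => q, fun _ => false, rfl, rfl, fun n _ _ => by omega, by simp⟩
  | succ d ih =>
    intro i q q' e h
    rw [seg_cons _ (by omega)] at h
    obtain ⟨q1, b1, b2, h1, h2, rfl⟩ := h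
    rw [show i + (d + 1) = (i + 1) + d by omega] at h2
    obtain ⟨ρ, c, r1, r2, r3, r4⟩ := ih _ _ _ _ h2
    refine ⟨fun n => if n = i then q else ρ n, fun n => if n = i then b1 else c n, by simp,
      ?_, ?_, ?_⟩
    · rw [← r2]; simp [show i + (d + 1) = (i + 1) + d by omega]; intro h; omega
    · intro n hn1 hn2
      by_cases hn : n = i
      · subst hn; simp [r1, h1]
      · simp only [hn, if_false, show n + 1 ≠ i by omega]
        exact r3 n (by omega) (by omega)
    · intro he
      rcases Bool.or_eq_true_iff.1 he with he | he
      · exact ⟨i, le_rfl, by omega, by simp [he]⟩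
      · obtain ⟨n, hn1, hn2, hn3⟩ := r4 he
        exact ⟨n, by omega, by omega, by simp [hn3, show n ≠ i by omega]⟩

/-- cut points with a leading zero -/
def lead (b : ℕ → ℕ) : ℕ → ℕ
  | 0 => 0
  | i + 1 => b i

theorem lead_le {b : ℕ → ℕ} (hb : StrictMono b) (i : ℕ) : lead b i ≤ lead b (i + 1) := by
  cases i with
  | zero => exact Nat.zero_le _
  | succ i => exact hb.monotone (Nat.le_succ i)

theorem exists_idx {b : ℕ → ℕ} (hb : StrictMono b) : ∃ idx : ℕ → ℕ,
    ∀ n, lead b (idx n) ≤ n ∧ n < b (idx n) := by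
  have h : ∀ n, ∃ i, lead b i ≤ n ∧ n < b i := by
    intro n
    have hex : ∃ i, n < b i := ⟨n + 1, lt_of_lt_of_le (Nat.lt_succ_self n) (hb.id_le _)⟩
    classical
    refine ⟨Nat.find hex, ?_, Nat.find_spec hex⟩
    cases hi : Nat.find hex with
    | zero => exact Nat.zero_le _
    | succ i => exact not_lt.1 (Nat.find_min hex (by omega))
  exact ⟨fun n => (h n).choose, fun n => (h n).choose_spec⟩

theorem idx_unique {b : ℕ → ℕ} (hb : StrictMono b) {i j n : ℕ} (hi : lead b i ≤ n) (hi' : n < b i)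
    (hj : lead b j ≤ n) (hj' : n < b j) : i = j := by
  rcases lt_trichotomy i j with h | h | h
  · obtain ⟨j, rfl⟩ := Nat.exists_eq_add_of_lt h
    have : b i ≤ b (i + j) := hb.monotone (by omega)
    have hj2 : b (i + j) ≤ n := hj
    omega
  · exact h
  · obtain ⟨i, rfl⟩ := Nat.exists_eq_add_of_lt h
    have : b j ≤ b (j + i) := hb.monotone (by omega)
    have hj2 : b (j + i) ≤ n := hi
    omega

def BAcc {X Q : Type} (st : Q → X → Q → Bool → Prop) (q0 : Q) : Set (ℕ → X) :=
  {ξ | ∃ (ρ : ℕ → Q) (c : ℕ → Bool), ρ 0 = q0 ∧ (∀ n, st (ρ n) (ξ n) (ρ (n + 1)) (c n)) ∧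
    ∀ N, ∃ n, N ≤ n ∧ c n = true}

theorem glue {X Q : Type} (st : Q → X → Q → Bool → Prop) (η : ℕ → X) (b : ℕ → ℕ)
    (hb : StrictMono b) (p : ℕ → Q) (e : ℕ → Bool)
    (h : ∀ i, Prof st (seg η (lead b i) (lead b (i + 1))) (p i) (p (i + 1)) (e i))
    (he : ∀ N, ∃ i, N ≤ i ∧ e i = true) : η ∈ BAcc st (p 0) := by
  have h1 : ∀ i, ∃ (ρ : ℕ → Q) (c : ℕ → Bool),
      ρ (lead b i) = p i ∧ ρ (lead b (i + 1)) = p (i + 1) ∧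
      (∀ n, lead b i ≤ n → n < lead b (i + 1) → st (ρ n) (η n) (ρ (n + 1)) (c n)) ∧
      (e i = true → ∃ n, lead b i ≤ n ∧ n < lead b (i + 1) ∧ c n = true) := by
    intro i
    have := run_of_Prof st η (lead b (i + 1) - lead b i) (lead b i) (p i) (p (i + 1)) (e i)
    rw [Nat.add_sub_cancel' (lead_le hb i)] at this
    exact this (h i)
  choose r c r1 r2 r3 r4 using h1
  obtain ⟨idx, hidx⟩ := exists_idx hb
  refine ⟨fun n => r (idx n) n, fun n => c (idx n) n, ?_, ?_, ?_⟩
  · by_cases h0 : b 0 = 0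
    · have : idx 0 = 1 := idx_unique hb (hidx 0).1 (hidx 0).2 (by simp [lead, h0])
        (by have := hb (Nat.zero_lt_one); omega)
      have e1 := r1 1
      have e2 := r2 0
      have e3 := r1 0
      simp only [lead, h0, zero_add] at e1 e2 e3
      simp only [this, e1]
      rw [← e2, e3]
    · have : idx 0 = 0 := idx_unique hb (hidx 0).1 (hidx 0).2 (by simp [lead]) (by omega)
      simp only [this]
      exact r1 0
  · intro n
    obtain ⟨hn1, hn2⟩ := hidx n
    have hst := r3 (idx n) n hn1 hn2
    have : r (idx (n + 1)) (n + 1) = r (idx n) (n + 1) := by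
      by_cases hlt : n + 1 < b (idx n)
      · rw [idx_unique hb (hidx (n + 1)).1 (hidx (n + 1)).2 (by omega : lead b (idx n) ≤ n + 1) hlt]
      · have heq : n + 1 = b (idx n) := by omega
        have hi : idx (n + 1) = idx n + 1 :=
          idx_unique hb (hidx (n + 1)).1 (hidx (n + 1)).2 (by simp [lead, heq])
            (by rw [heq]; exact hb (Nat.lt_succ_self _))
        have e1 := r1 (idx n + 1)
        have e2 := r2 (idx n)
        simp only [lead] at e1 e2
        rw [hi, heq, e1, e2]
    simp only [this]
    exact hst
  · intro N
    obtain ⟨i, hi, hei⟩ := he (N + 1)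
    obtain ⟨n, hn1, hn2, hn3⟩ := r4 i hei
    obtain ⟨i, rfl⟩ : ∃ j, i = j + 1 := ⟨i - 1, by omega⟩
    have : i ≤ b i := hb.id_le i
    have hn1' : b i ≤ n := hn1
    refine ⟨n, by omega, ?_⟩
    have : idx n = i + 1 := idx_unique hb (hidx n).1 (hidx n).2 hn1 hn2
    simp only [this, hn3]

theorem sat_BAcc {X Q : Type} [Finite Q] (st : Q → X → Q → Bool → Prop) (q0 : Q) :
    Sat (BAcc st q0) := by
  refine ⟨Q → Q → Bool → Prop, inferInstance, Prof st, fun A B q q' b =>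
    ∃ q1 b1 b2, A q q1 b1 ∧ B q1 q' b2 ∧ b = (b1 || b2), ?_, ?_⟩
  · intro u v; funext q q' b; exact propext (Prof_append st u v q q' b)
  · rintro ξ η a b ha hb h0 hi ⟨ρ, c, rfl, hst, hinf⟩
    have h1 : ∀ i, ∃ e, Prof st (seg ξ (lead a i) (lead a (i + 1))) (ρ (lead a i))
        (ρ (lead a (i + 1))) e ∧ ∀ n, lead a i ≤ n → n < lead a (i + 1) → c n = true → e = true := by
      intro i
      have := Prof_of_run st ξ ρ c hst (lead a i) (lead a (i + 1) - lead a i)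
      rwa [Nat.add_sub_cancel' (lead_le ha i)] at this
    choose e he1 he2 using h1
    refine glue st η b hb (fun i => ρ (lead a i)) e ?_ ?_
    · intro i
      have : Prof st (seg ξ (lead a i) (lead a (i + 1))) = Prof st (seg η (lead b i) (lead b (i + 1))) := by
        cases i with
        | zero => exact h0
        | succ i => exact hi i
      rw [← this]; exact he1 i
    · intro N
      obtain ⟨n, hn, hc⟩ := hinf (a N)
      obtain ⟨idx, hidx⟩ := exists_idx ha
      refine ⟨idx n, ?_, he2 _ n (hidx n).1 (hidx n).2 hc⟩
      have : a N < a (idx n) := lt_of_le_of_lt hn (hidx n).2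
      exact (ha.lt_iff_lt.1 this).le

/-- The Büchi automaton of `W·V^ω`. -/
def wvStep {X A B : Type} (MW : DFA X A) (MV : DFA X B) (q : A ⊕ B) (x : X) (q' : A ⊕ B)
    (c : Bool) : Prop :=
  (q' = if c then Sum.inr (MV.step MV.start x) else Sum.map (MW.step · x) (MV.step · x) q) ∧
  (c = true → Sum.elim (· ∈ MW.accept) (· ∈ MV.accept) q)

theorem run_facts {X A B : Type} (MW : DFA X A) (MV : DFA X B) (ξ : ℕ → X) (ρ : ℕ → A ⊕ B)
    (c : ℕ → Bool) (k : ℕ → ℕ) (hk : StrictMono k) (hc : ∀ n, c n = true ↔ ∃ i, k i = n)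
    (h0 : ρ 0 = Sum.inl MW.start)
    (hρ : ∀ n, ρ (n + 1) = if c n then Sum.inr (MV.step MV.start (ξ n))
      else Sum.map (MW.step · (ξ n)) (MV.step · (ξ n)) (ρ n)) :
    (∀ n, n ≤ k 0 → ρ n = Sum.inl (MW.eval (seg ξ 0 n))) ∧
    (∀ i n, k i < n → n ≤ k (i + 1) → ρ n = Sum.inr (MV.eval (seg ξ (k i) n))) := by
  constructor
  · intro n
    induction n with
    | zero => intro _; rw [h0, seg_self]; rfl
    | succ n ih =>
      intro hn
      have : ¬ (c n = true) := by
        rw [hc]; rintro ⟨i, hi⟩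
        have : k 0 ≤ k i := hk.monotone (Nat.zero_le i)
        omega
      rw [hρ, if_neg this, ih (by omega), seg_succ _ (Nat.zero_le n), DFA.eval_append_singleton]
      rfl
  · intro i n
    induction n with
    | zero => intro h; omega
    | succ n ih =>
      intro hn1 hn2
      by_cases hn : k i = n
      · rw [hρ, if_pos ((hc n).2 ⟨i, hn⟩), hn, seg_succ _ le_rfl, seg_self]; rfl
      · have : ¬ (c n = true) := by
          rw [hc]; rintro ⟨j, hj⟩
          have h1 : i < j := hk.lt_iff_lt.1 (by omega)
          have h2 : j < i + 1 := hk.lt_iff_lt.1 (by omega)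
          omega
        rw [hρ, if_neg this, ih (by omega) (by omega), seg_succ _ (by omega),
          DFA.eval_append_singleton]
        rfl

theorem BAcc_wv {X A B : Type} (MW : DFA X A) (MV : DFA X B) :
    BAcc (wvStep MW MV) (Sum.inl MW.start) = catOmega MW.accepts (omegaPow MV.accepts) := by
  ext ξ
  rw [mem_catOmega]
  constructor
  · rintro ⟨ρ, c, h0, hst, hinf⟩
    have hI : (Set.ofPred fun n => c n = true).Infinite := by
      apply Set.infinite_of_forall_exists_gt
      intro N
      obtain ⟨n, hn, hc⟩ := hinf (N + 1)
      exact ⟨n, hc, hn⟩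
    have hk := Nat.nth_strictMono hI
    have hr := Nat.range_nth_of_infinite hI
    have hc : ∀ n, c n = true ↔ ∃ i, Nat.nth (fun n => c n = true) i = n := by
      intro n
      have : n ∈ Set.range (Nat.nth fun n => c n = true) ↔ n ∈ (Set.ofPred fun n => c n = true) := by
        rw [hr]
      exact this.symm
    obtain ⟨f1, f2⟩ := run_facts MW MV ξ ρ c _ hk hc h0 (fun n => (hst n).1)
    refine ⟨_, hk, ?_, ?_⟩
    · have := (hst _).2 ((hc _).2 ⟨0, rfl⟩)
      rw [f1 _ le_rfl] at this
      exact this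
    · intro i
      have := (hst _).2 ((hc _).2 ⟨i + 1, rfl⟩)
      rw [f2 i _ (hk (Nat.lt_add_one i)) le_rfl] at this
      exact this
  · rintro ⟨k, hk, hW, hV⟩
    classical
    let c : ℕ → Bool := fun n => decide (∃ i, k i = n)
    let ρ : ℕ → A ⊕ B := fun n => Nat.rec (Sum.inl MW.start) (fun n q =>
      if c n then Sum.inr (MV.step MV.start (ξ n))
      else Sum.map (MW.step · (ξ n)) (MV.step · (ξ n)) q) n
    have hc : ∀ n, c n = true ↔ ∃ i, k i = n := fun n => by simp [c]
    obtain ⟨f1, f2⟩ := run_facts MW MV ξ ρ c k hk hc rfl (fun n => rfl)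
    refine ⟨ρ, c, rfl, fun n => ⟨rfl, ?_⟩, ?_⟩
    · intro h
      obtain ⟨i, rfl⟩ := (hc n).1 h
      cases i with
      | zero => rw [f1 _ le_rfl]; exact hW
      | succ i => rw [f2 i _ (hk (Nat.lt_add_one i)) le_rfl]; exact hV i
    · intro N
      exact ⟨k N, hk.id_le N, (hc _).2 ⟨N, rfl⟩⟩

theorem IsRegOmega.sat {X : Type} {F : Set (ℕ → X)} (h : IsRegOmega F) : Sat F := by
  obtain ⟨n, W, V, hWV, rfl⟩ := h
  apply Sat.iUnion
  intro i
  obtain ⟨A, _, MW, hW⟩ := (hWV i).1.isRegular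
  obtain ⟨B, _, MV, hV⟩ := (hWV i).2.isRegular
  rw [← hW, ← hV, ← BAcc_wv]
  exact sat_BAcc _ _

end Buchi

theorem stmt1 {X : Type} [Fintype X] (hX : 2 ≤ Fintype.card X)
    (F G : Set (ℕ → X)) (hF : IsRegOmega F) (hG : IsRegOmega G) :
    IsRegOmega (F ∪ G) ∧ IsRegOmega (F ∩ G) ∧ IsRegOmega (Set.univ \ F) := by
  refine ⟨(hF.sat.union hG.sat).isRegOmega, ?_, ?_⟩
  · have := (hF.sat.compl.union hG.sat.compl).compl.isRegOmega
    rwa [Set.compl_union, compl_compl, compl_compl] at this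
  · rw [← Set.compl_eq_univ_sdiff]
    exact hF.sat.compl.isRegOmega

end AutoBaire
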